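/- Let E be a finite-dimensional real normed vector space, let X1, X2 : E → E be C^∞ vector fields and θ : E → ℝ a C^∞ function. Define the rotated vector fields Y1 = (cos θ)·X1 − (sin θ)·X2 and Y2 = (sin θ)·X1 + (cos θ)·X2 (pointwise scalar multiples). Then the Lie bracket satisfies, at every point of E, [Y2, Y1] = [X2, X1] − X1(θ)·X1 − X2(θ)·X2, where X(θ) denotes the directional derivative p ↦ Dθ(p)(X(p)). -/

import Mathlib

/-- The Lie bracket of two vector fields on a normed vector space:
`[X, Y](p) = DY(p)(X(p)) − DX(p)(Y(p))`. -/
noncomputable def vlie {E : Type*} [NormedAddCommGroup E] [NormedSpace ℝ E]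
    (X Y : E → E) : E → E :=
  fun p => fderiv ℝ Y p (X p) - fderiv ℝ X p (Y p)

/-- rotating a pair of smooth vector fields by a smooth angle `θ`
changes the Lie bracket as `[Y2, Y1] = [X2, X1] − X1(θ)·X1 − X2(θ)·X2`. -/
theorem rotated_frame_lie_bracket
    {E : Type*} [NormedAddCommGroup E] [NormedSpace ℝ E] [FiniteDimensional ℝ E]
    (X1 X2 : E → E) (θ : E → ℝ)
    (hX1 : ContDiff ℝ (⊤ : ℕ∞) X1) (hX2 : ContDiff ℝ (⊤ : ℕ∞) X2)
    (hθ : ContDiff ℝ (⊤ : ℕ∞) θ)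
    (Y1 Y2 : E → E)
    (hY1 : Y1 = fun p => Real.cos (θ p) • X1 p - Real.sin (θ p) • X2 p)
    (hY2 : Y2 = fun p => Real.sin (θ p) • X1 p + Real.cos (θ p) • X2 p) :
    ∀ p : E, vlie Y2 Y1 p =
      vlie X2 X1 p - (fderiv ℝ θ p (X1 p)) • X1 p - (fderiv ℝ θ p (X2 p)) • X2 p := by
  intro p
  have d1 : HasFDerivAt X1 (fderiv ℝ X1 p) p :=
    (hX1.differentiable (by simp) p).hasFDerivAt
  have d2 : HasFDerivAt X2 (fderiv ℝ X2 p) p :=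
    (hX2.differentiable (by simp) p).hasFDerivAt
  have dt : HasFDerivAt θ (fderiv ℝ θ p) p :=
    (hθ.differentiable (by simp) p).hasFDerivAt
  have e1 := ((dt.cos.fun_smul d1).fun_sub (dt.sin.fun_smul d2)).fderiv
  have e2 := ((dt.sin.fun_smul d1).fun_add (dt.cos.fun_smul d2)).fderiv
  have h := Real.sin_sq_add_cos_sq (θ p)
  subst hY1 hY2
  simp only [vlie]
  rw [e1, e2]
  simp only [_root_.add_apply, _root_.sub_apply,
    _root_.smul_apply, ContinuousLinearMap.smulRight_apply, map_add, map_sub,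
    map_smul, smul_eq_mul]
  linear_combination (norm := module) h • (fderiv ℝ X1 p (X2 p) - fderiv ℝ X2 p (X1 p)
    - fderiv ℝ θ p (X1 p) • X1 p - fderiv ℝ θ p (X2 p) • X2 p)
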